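/- Let v be a random vector in ℝ^p and h a random variable with h > 0 almost surely, such that the matrices E[v vᵀ], E[h v vᵀ] and E[h² v vᵀ] exist (Bochner integrable) and E[v vᵀ] and E[h v vᵀ] are positive definite. Then E[v vᵀ]⁻¹ ≤ E[h v vᵀ]⁻¹ E[h² v vᵀ] E[h v vᵀ]⁻¹ in the Loewner ordering. -/

import Mathlib

open MeasureTheory ProbabilityTheory Filter Matrix

noncomputable section

/-!
Put `u = h v`. The second moment matrix of the joint vector `(u, v)` has blocks `D = E[u uᵀ]`,
`A = E[u vᵀ]`, `Aᵀ` and `B = E[v vᵀ]`, and is positive semidefinite. If `A` is invertible, so is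
`B`: when `B x = 0`, the vector `(0, x)` annihilates the quadratic form of the block matrix, hence
lies in its kernel, so `A x = 0`. The Schur complement of `B` now gives the matrix Cauchy–Schwarz
inequality `A B⁻¹ Aᵀ ≤ D`, and conjugating by `A⁻¹` yields `B⁻¹ ≤ A⁻¹ D A⁻ᵀ`.
-/

open scoped ComplexOrder

section FromBlocks

variable {m n 𝕜 : Type*} [Finite m] [Fintype n] [RCLike 𝕜]

lemma mulVec_eq_zero_of_posSemidef_fromBlocks {D : Matrix m m 𝕜} {A : Matrix m n 𝕜}
    {C : Matrix n m 𝕜} {B : Matrix n n 𝕜} (hP : (fromBlocks D A C B).PosSemidef) {x : n → 𝕜}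
    (hx : B *ᵥ x = 0) : A *ᵥ x = 0 := by
  have := Fintype.ofFinite m
  have quadForm_eq_zero :
      star (Sum.elim 0 x) ⬝ᵥ fromBlocks D A C B *ᵥ Sum.elim 0 x = 0 := by
    simp [fromBlocks_mulVec, Function.star_sumElim, hx]
  have mulVec_eq_zero := (hP.dotProduct_mulVec_zero_iff _).mp quadForm_eq_zero
  ext i
  simpa [fromBlocks_mulVec] using congrFun mulVec_eq_zero (Sum.inl i)

variable [DecidableEq n] {A B D : Matrix n n 𝕜}

lemma posDef_of_posSemidef_fromBlocks_of_isUnit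
    (hP : (fromBlocks D A Aᴴ B).PosSemidef) (hA : IsUnit A) : B.PosDef := by
  have hB : B.PosSemidef := hP.submatrix Sum.inr
  refine hB.posDef_iff_isUnit.mpr (mulVec_injective_iff_isUnit.mp ?_)
  refine (injective_iff_map_eq_zero B.mulVecLin).mpr fun x hx => ?_
  refine mulVec_injective_of_isUnit hA ?_
  rw [mulVec_eq_zero_of_posSemidef_fromBlocks hP hx, mulVec_zero]

lemma posSemidef_inv_mul_mul_inv_sub_inv_of_fromBlocks
    (hP : (fromBlocks D A Aᴴ B).PosSemidef) (hA : IsUnit A) :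
    (A⁻¹ * D * Aᴴ⁻¹ - B⁻¹).PosSemidef := by
  have hB : B.PosDef := posDef_of_posSemidef_fromBlocks_of_isUnit hP hA
  have := hB.isUnit.invertible
  have schur : (D - A * B⁻¹ * Aᴴ).PosSemidef := (hB.fromBlocks₂₂ D A).mp hP
  have conj_eq : A⁻¹ * (D - A * B⁻¹ * Aᴴ) * A⁻¹ᴴ = A⁻¹ * D * Aᴴ⁻¹ - B⁻¹ := by
    have hAdet : IsUnit A.det := (isUnit_iff_isUnit_det A).mp hA
    have hAHdet : IsUnit Aᴴ.det := (isUnit_iff_isUnit_det Aᴴ).mp hA.star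
    rw [conjTranspose_nonsing_inv, Matrix.mul_sub, Matrix.sub_mul, Matrix.mul_assoc A B⁻¹ Aᴴ,
      nonsing_inv_mul_cancel_left _ _ hAdet, mul_nonsing_inv_cancel_right _ _ hAHdet]
  exact conj_eq ▸ schur.mul_mul_conjTranspose_same A⁻¹

end FromBlocks

section CrossMoment

variable {Ω m n 𝕜 : Type*} [MeasurableSpace Ω] [RCLike 𝕜] {μ : Measure Ω}

lemma dotProduct_integral_mulVec [Fintype m] [Fintype n] {M : Ω → Matrix m n 𝕜}
    (hM : ∀ i j, Integrable (fun ω => M ω i j) μ) (x : m → 𝕜) (y : n → 𝕜) :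
    x ⬝ᵥ (of fun i j => ∫ ω, M ω i j ∂μ) *ᵥ y = ∫ ω, x ⬝ᵥ M ω *ᵥ y ∂μ := by
  have hterm (i : m) (j : n) : Integrable (fun ω => x i * (M ω i j * y j)) μ :=
    ((hM i j).mul_const _).const_mul _
  simp only [dotProduct, mulVec, of_apply, Finset.mul_sum]
  rw [integral_finsetSum _ fun i _ => integrable_finsetSum _ fun j _ => hterm i j]
  refine Finset.sum_congr rfl fun i _ => ?_
  rw [integral_finsetSum _ fun j _ => hterm i j]
  simp only [integral_const_mul, integral_mul_const]

lemma posSemidef_integral [Finite n] {M : Ω → Matrix n n 𝕜}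
    (hM : ∀ i j, Integrable (fun ω => M ω i j) μ) (hpos : ∀ᵐ ω ∂μ, (M ω).PosSemidef) :
    (of fun i j => ∫ ω, M ω i j ∂μ).PosSemidef := by
  have := Fintype.ofFinite n
  refine .of_dotProduct_mulVec_nonneg ?_ fun x => ?_
  · ext i j
    rw [conjTranspose_apply, of_apply, of_apply, RCLike.star_def, ← integral_conj]
    exact integral_congr_ae (hpos.mono fun ω hω => hω.isHermitian.apply i j)
  · rw [dotProduct_integral_mulVec hM]
    exact integral_nonneg_of_ae (hpos.mono fun ω hω => hω.dotProduct_mulVec_nonneg x)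

/-- The cross moment matrix `E[u wᴴ]` of two random vectors, the expectation being taken entrywise;
`crossMoment μ u u` is the (uncentred) second moment matrix of `u`. As for any Bochner integral, an
entry whose integrand is not integrable is `0`. -/
def crossMoment (μ : Measure Ω) (u : Ω → m → 𝕜) (w : Ω → n → 𝕜) : Matrix m n 𝕜 :=
  of fun i j => ∫ ω, u ω i * star (w ω j) ∂μ

lemma conjTranspose_crossMoment (u : Ω → m → 𝕜) (w : Ω → n → 𝕜) :
    (crossMoment μ u w)ᴴ = crossMoment μ w u := by
  ext i j
  simp only [crossMoment, conjTranspose_apply, of_apply, RCLike.star_def, ← integral_conj, map_mul,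
    RCLike.conj_conj, mul_comm]

lemma posSemidef_crossMoment_self [Finite n] {u : Ω → n → 𝕜}
    (hu : ∀ i j, Integrable (fun ω => u ω i * star (u ω j)) μ) :
    (crossMoment μ u u).PosSemidef :=
  posSemidef_integral hu (ae_of_all μ fun ω => posSemidef_vecMulVec_self_star (u ω))

lemma crossMoment_sumElim (u : Ω → m → 𝕜) (w : Ω → n → 𝕜) :
    crossMoment μ (fun ω => Sum.elim (u ω) (w ω)) (fun ω => Sum.elim (u ω) (w ω)) =
      fromBlocks (crossMoment μ u u) (crossMoment μ u w)
        (crossMoment μ w u) (crossMoment μ w w) := by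
  ext (i | i) (j | j) <;> rfl

lemma integrable_mul_star_comm {f g : Ω → 𝕜} (hfg : Integrable (fun ω => f ω * star (g ω)) μ) :
    Integrable (fun ω => g ω * star (f ω)) μ := by
  simpa [mul_comm] using
    (RCLike.conjCLE (K := 𝕜)).toContinuousLinearMap.integrable_comp hfg

lemma posSemidef_fromBlocks_crossMoment [Finite m] [Finite n] {u : Ω → m → 𝕜} {w : Ω → n → 𝕜}
    (huu : ∀ i j, Integrable (fun ω => u ω i * star (u ω j)) μ)
    (huw : ∀ i j, Integrable (fun ω => u ω i * star (w ω j)) μ)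
    (hww : ∀ i j, Integrable (fun ω => w ω i * star (w ω j)) μ) :
    (fromBlocks (crossMoment μ u u) (crossMoment μ u w)
      (crossMoment μ w u) (crossMoment μ w w)).PosSemidef := by
  rw [← crossMoment_sumElim]
  refine posSemidef_crossMoment_self ?_
  rintro (i | i) (j | j)
  exacts [huu i j, huw i j, integrable_mul_star_comm (huw j i), hww i j]

theorem exp_inv_le_inv_exp_sq_general [Fintype n] [DecidableEq n] {u w : Ω → n → 𝕜}
    (huu : ∀ i j, Integrable (fun ω => u ω i * star (u ω j)) μ)
    (huw : ∀ i j, Integrable (fun ω => u ω i * star (w ω j)) μ)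
    (hww : ∀ i j, Integrable (fun ω => w ω i * star (w ω j)) μ)
    (hunit : IsUnit (crossMoment μ u w)) :
    ((crossMoment μ u w)⁻¹ * crossMoment μ u u * (crossMoment μ w u)⁻¹ -
      (crossMoment μ w w)⁻¹).PosSemidef := by
  have hP := posSemidef_fromBlocks_crossMoment huu huw hww
  rw [← conjTranspose_crossMoment u w] at hP ⊢
  exact posSemidef_inv_mul_mul_inv_sub_inv_of_fromBlocks hP hunit

end CrossMoment

/-- if `h > 0` a.s. and `B := E[v vᵀ]`, `A := E[h v vᵀ]` are positive
definite while `D := E[h² v vᵀ]` exists (expectations taken entrywise), then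
`B⁻¹ ≤ A⁻¹ D A⁻¹` in the Loewner ordering, i.e. `A⁻¹ D A⁻¹ - B⁻¹` is PSD. -/
theorem exp_inv_le_inv_exp_sq
    {Ω : Type*} [MeasurableSpace Ω] (μ : Measure Ω) [IsProbabilityMeasure μ]
    {p : ℕ} (v : Ω → Fin p → ℝ) (h : Ω → ℝ)
    (hv : Measurable v) (hh : Measurable h)
    (hpos : ∀ᵐ ω ∂μ, 0 < h ω)
    (hBint : ∀ i j, Integrable (fun ω => v ω i * v ω j) μ)
    (hAint : ∀ i j, Integrable (fun ω => h ω * (v ω i * v ω j)) μ)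
    (hDint : ∀ i j, Integrable (fun ω => h ω ^ 2 * (v ω i * v ω j)) μ)
    (A B D : Matrix (Fin p) (Fin p) ℝ)
    (hA : A = Matrix.of fun i j => ∫ ω, h ω * (v ω i * v ω j) ∂μ)
    (hB : B = Matrix.of fun i j => ∫ ω, v ω i * v ω j ∂μ)
    (hD : D = Matrix.of fun i j => ∫ ω, h ω ^ 2 * (v ω i * v ω j) ∂μ)
    (hApd : A.PosDef) (hBpd : B.PosDef) :
    (A⁻¹ * D * A⁻¹ - B⁻¹).PosSemidef := by
  subst hA hB hD
  simpa only [crossMoment, star_trivial, sq, mul_assoc, mul_left_comm] using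
    exp_inv_le_inv_exp_sq_general (μ := μ) (u := fun ω i => h ω * v ω i) (w := v)
      (by simpa only [star_trivial, sq, mul_assoc, mul_left_comm] using hDint)
      (by simpa only [star_trivial, mul_assoc] using hAint) hBint
      (by simpa only [crossMoment, star_trivial, mul_assoc] using hApd.isUnit)
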